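/- Let k be a field of characteristic zero, a ∈ k and ξ₁,…,ξ₆ ∈ k, and suppose three of the values ξᵢ coincide, i.e. ξᵢ = ξⱼ = ξₖ for some pairwise distinct indices i,j,k ∈ {1,…,6}. Then the Igusa invariants B, C, D, E of the binary sextic a·∏(x − ξᵢ y) all vanish: B = a⁴ Σ_{ten} (12)²(23)²(31)²(45)²(56)²(64)² = 0, C = a⁶ Σ_{sixty} (12)²(23)²(31)²(45)²(56)²(64)²(14)²(25)²(36)² = 0, D = a¹⁰ ∏_{i<j} (ξᵢ−ξⱼ)² = 0, and E = a¹⁵ ∏_{fifteen} det[[1, ξᵢ+ξⱼ, ξᵢξⱼ],[1, ξₖ+ξₗ, ξₖξₗ],[1, ξₘ+ξₙ, ξₘξₙ]] = 0. -/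

import Mathlib

/-!
Let `c` be the common value of the three coinciding roots.

For `B` and `C`: every term contains the squared differences inside each of two complementary
triples of indices, and by the pigeonhole principle two of the three coinciding roots lie in the
same triple, so every term vanishes (`triTerm_mul_triTerm_eq_zero`).  `D` contains the difference
of two of the equal roots.

For `E`: some perfect matching puts the three coinciding roots into three different pairs
(`exists_separating_matching`).  Up to sign and order, the rows of its determinant are the
coefficients of the quadratics `(x - ξᵢ)(x - ξⱼ)`, which then share the root `c`, so the
determinant vanishes (`matchDet_eq_zero`).
-/

/-- `(ij)²(jl)²(li)²` for a triple `{i,j,l}` of indices of roots. -/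
def triTerm {k : Type*} [CommRing k] (ξ : Fin 6 → k) (i j l : Fin 6) : k :=
  (ξ i - ξ j) ^ 2 * (ξ j - ξ l) ^ 2 * (ξ l - ξ i) ^ 2

/-- The invariant `B` (without the factor `a⁴`): the sum over the ten partitions of
`{1,…,6}` into two unordered triples of `(ij)²(jk)²(ki)²(lm)²(mn)²(nl)²`. -/
def invB {k : Type*} [CommRing k] (ξ : Fin 6 → k) : k :=
  triTerm ξ 0 1 2 * triTerm ξ 3 4 5 + triTerm ξ 0 1 3 * triTerm ξ 2 4 5 +
  triTerm ξ 0 1 4 * triTerm ξ 2 3 5 + triTerm ξ 0 1 5 * triTerm ξ 2 3 4 +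
  triTerm ξ 0 2 3 * triTerm ξ 1 4 5 + triTerm ξ 0 2 4 * triTerm ξ 1 3 5 +
  triTerm ξ 0 2 5 * triTerm ξ 1 3 4 + triTerm ξ 0 3 4 * triTerm ξ 1 2 5 +
  triTerm ξ 0 3 5 * triTerm ξ 1 2 4 + triTerm ξ 0 4 5 * triTerm ξ 1 2 3

/-- The invariant `C` (without the factor `a⁶`): the sum of the sixty terms in the
`𝔖₆`-orbit of `(12)²(23)²(31)²(45)²(56)²(64)²(14)²(25)²(36)²`.  Summing over all `720`
permutations counts each of the sixty distinct terms with multiplicity `12`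
(the stabilizer), whence the factor `(12)⁻¹`. -/
noncomputable def invC {k : Type*} [Field k] (ξ : Fin 6 → k) : k :=
  (12 : k)⁻¹ * ∑ σ : Equiv.Perm (Fin 6),
    triTerm ξ (σ 0) (σ 1) (σ 2) * triTerm ξ (σ 3) (σ 4) (σ 5) *
      ((ξ (σ 0) - ξ (σ 3)) * (ξ (σ 1) - ξ (σ 4)) * (ξ (σ 2) - ξ (σ 5))) ^ 2

/-- The discriminant factor `∏_{i<j}(ξᵢ-ξⱼ)²` (so `D = a¹⁰ · invD ξ`). -/
def invD {k : Type*} [CommRing k] (ξ : Fin 6 → k) : k :=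
  ∏ p ∈ Finset.univ.filter (fun p : Fin 6 × Fin 6 => p.1 < p.2), (ξ p.1 - ξ p.2) ^ 2

/-- The determinant `det [[1, ξᵢ+ξⱼ, ξᵢξⱼ], [1, ξₗ+ξₘ, ξₗξₘ], [1, ξₚ+ξ_q, ξₚξ_q]]`
attached to a perfect matching. -/
def matchDet {k : Type*} [CommRing k] (ξ : Fin 6 → k) (i j l m p q : Fin 6) : k :=
  Matrix.det !![1, ξ i + ξ j, ξ i * ξ j;
                1, ξ l + ξ m, ξ l * ξ m;
                1, ξ p + ξ q, ξ p * ξ q]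

/-- The invariant `E` (without the factor `a¹⁵`): the product over the fifteen perfect
matchings of `{1,…,6}` of the corresponding `3×3` determinants. -/
def invE {k : Type*} [CommRing k] (ξ : Fin 6 → k) : k :=
  matchDet ξ 0 1 2 3 4 5 * matchDet ξ 0 1 2 4 3 5 * matchDet ξ 0 1 2 5 3 4 *
  matchDet ξ 0 2 1 3 4 5 * matchDet ξ 0 2 1 4 3 5 * matchDet ξ 0 2 1 5 3 4 *
  matchDet ξ 0 3 1 2 4 5 * matchDet ξ 0 3 1 4 2 5 * matchDet ξ 0 3 1 5 2 4 *
  matchDet ξ 0 4 1 2 3 5 * matchDet ξ 0 4 1 3 2 5 * matchDet ξ 0 4 1 5 2 3 *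
  matchDet ξ 0 5 1 2 3 4 * matchDet ξ 0 5 1 3 2 4 * matchDet ξ 0 5 1 4 2 3

/-- Two of the three indices with equal roots lie in the same half `{0,1,2}` or `{3,4,5}`. -/
lemma triTerm_mul_triTerm_eq_zero_aux {k : Type*} [CommRing k] (η : Fin 6 → k)
    {i j : Fin 6} (hij : i ≠ j) (hs : i < 3 ↔ j < 3) (h : η i = η j) :
    triTerm η 0 1 2 * triTerm η 3 4 5 = 0 := by
  fin_cases i <;> fin_cases j <;> simp_all [triTerm]

/-- The two triples are the images under a surjection `v` of `{0,1,2}` and `{3,4,5}`, which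
covers both the ten partitions listed in `invB` and the permutations in `invC`. -/
lemma triTerm_mul_triTerm_eq_zero {k : Type*} [CommRing k] (ξ : Fin 6 → k)
    {i j l : Fin 6} (hij : i ≠ j) (hjl : j ≠ l) (hil : i ≠ l)
    (h₁ : ξ i = ξ j) (h₂ : ξ j = ξ l) (v : Fin 6 → Fin 6) (hv : Function.Surjective v) :
    triTerm ξ (v 0) (v 1) (v 2) * triTerm ξ (v 3) (v 4) (v 5) = 0 := by
  obtain ⟨i, rfl⟩ := hv i
  obtain ⟨j, rfl⟩ := hv j
  obtain ⟨l, rfl⟩ := hv l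
  have hij' : i ≠ j := fun h => hij (congrArg v h)
  have hjl' : j ≠ l := fun h => hjl (congrArg v h)
  have hil' : i ≠ l := fun h => hil (congrArg v h)
  change triTerm (ξ ∘ v) 0 1 2 * triTerm (ξ ∘ v) 3 4 5 = 0
  have pigeonhole : (i < 3 ↔ j < 3) ∨ (j < 3 ↔ l < 3) ∨ (i < 3 ↔ l < 3) := by tauto
  rcases pigeonhole with h | h | h
  · exact triTerm_mul_triTerm_eq_zero_aux _ hij' h h₁
  · exact triTerm_mul_triTerm_eq_zero_aux _ hjl' h h₂
  · exact triTerm_mul_triTerm_eq_zero_aux _ hil' h (h₁.trans h₂)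

/-- If `c` occurs in each of the three pairs, the vector `(c², -c, 1)` lies in the kernel of the
matrix. -/
lemma matchDet_eq_zero {k : Type*} [CommRing k] (ξ : Fin 6 → k) (c : k) {i j l m p q : Fin 6}
    (h₁ : ξ i = c ∨ ξ j = c) (h₂ : ξ l = c ∨ ξ m = c) (h₃ : ξ p = c ∨ ξ q = c) :
    matchDet ξ i j l m p q = 0 := by
  rw [matchDet, Matrix.det_fin_three]
  rcases h₁ with h₁ | h₁ <;> rcases h₂ with h₂ | h₂ <;> rcases h₃ with h₃ | h₃ <;>
    · simp [h₁, h₂, h₃]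
      ring

/-- The fifteen perfect matchings of `Fin 6` in the order used by `invE`; row `t` stands for the
matching `{t 0, t 1}, {t 2, t 3}, {t 4, t 5}`. -/
def matching : Fin 15 → Fin 6 → Fin 6 :=
  ![![0, 1, 2, 3, 4, 5], ![0, 1, 2, 4, 3, 5], ![0, 1, 2, 5, 3, 4],
    ![0, 2, 1, 3, 4, 5], ![0, 2, 1, 4, 3, 5], ![0, 2, 1, 5, 3, 4],
    ![0, 3, 1, 2, 4, 5], ![0, 3, 1, 4, 2, 5], ![0, 3, 1, 5, 2, 4],
    ![0, 4, 1, 2, 3, 5], ![0, 4, 1, 3, 2, 5], ![0, 4, 1, 5, 2, 3],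
    ![0, 5, 1, 2, 3, 4], ![0, 5, 1, 3, 2, 4], ![0, 5, 1, 4, 2, 3]]

lemma invE_eq_prod {k : Type*} [CommRing k] (ξ : Fin 6 → k) :
    invE ξ = ∏ t, matchDet ξ (matching t 0) (matching t 1) (matching t 2) (matching t 3)
      (matching t 4) (matching t 5) := by
  simp only [Fin.prod_univ_castSucc, Finset.univ_eq_empty, Finset.prod_empty, one_mul]
  rfl

set_option maxRecDepth 100000 in
set_option synthInstance.maxHeartbeats 200000 in
set_option synthInstance.maxSize 1000 in
lemma exists_separating_matching : ∀ i j l : Fin 6, i ≠ j → j ≠ l → i ≠ l →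
    ∃ t, (matching t 0 ∈ [i, j, l] ∨ matching t 1 ∈ [i, j, l]) ∧
      (matching t 2 ∈ [i, j, l] ∨ matching t 3 ∈ [i, j, l]) ∧
      (matching t 4 ∈ [i, j, l] ∨ matching t 5 ∈ [i, j, l]) := by
  decide

/-- If three of the roots `ξ₁,…,ξ₆` coincide, the Igusa invariants
`B = a⁴·invB`, `C = a⁶·invC`, `D = a¹⁰·invD` and `E = a¹⁵·invE` of the binary sextic
`a·∏(x - ξᵢ y)` all vanish. -/
theorem stmt5 {k : Type*} [Field k] [CharZero k] (a : k) (ξ : Fin 6 → k)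
    (i j l : Fin 6) (hij : i ≠ j) (hjl : j ≠ l) (hil : i ≠ l)
    (h₁ : ξ i = ξ j) (h₂ : ξ j = ξ l) :
    a ^ 4 * invB ξ = 0 ∧ a ^ 6 * invC ξ = 0 ∧
      a ^ 10 * invD ξ = 0 ∧ a ^ 15 * invE ξ = 0 := by
  have tri := triTerm_mul_triTerm_eq_zero ξ hij hjl hil h₁ h₂
  have hB : invB ξ = 0 := by
    simp only [invB]
    rw [show triTerm ξ 0 1 2 * triTerm ξ 3 4 5 = 0 from tri ![0, 1, 2, 3, 4, 5] (by decide),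
      show triTerm ξ 0 1 3 * triTerm ξ 2 4 5 = 0 from tri ![0, 1, 3, 2, 4, 5] (by decide),
      show triTerm ξ 0 1 4 * triTerm ξ 2 3 5 = 0 from tri ![0, 1, 4, 2, 3, 5] (by decide),
      show triTerm ξ 0 1 5 * triTerm ξ 2 3 4 = 0 from tri ![0, 1, 5, 2, 3, 4] (by decide),
      show triTerm ξ 0 2 3 * triTerm ξ 1 4 5 = 0 from tri ![0, 2, 3, 1, 4, 5] (by decide),
      show triTerm ξ 0 2 4 * triTerm ξ 1 3 5 = 0 from tri ![0, 2, 4, 1, 3, 5] (by decide),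
      show triTerm ξ 0 2 5 * triTerm ξ 1 3 4 = 0 from tri ![0, 2, 5, 1, 3, 4] (by decide),
      show triTerm ξ 0 3 4 * triTerm ξ 1 2 5 = 0 from tri ![0, 3, 4, 1, 2, 5] (by decide),
      show triTerm ξ 0 3 5 * triTerm ξ 1 2 4 = 0 from tri ![0, 3, 5, 1, 2, 4] (by decide),
      show triTerm ξ 0 4 5 * triTerm ξ 1 2 3 = 0 from tri ![0, 4, 5, 1, 2, 3] (by decide)]
    simp only [add_zero]
  have hC : invC ξ = 0 := by
    rw [invC, Finset.sum_eq_zero, mul_zero]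
    intro σ _
    rw [tri σ σ.surjective, zero_mul]
  have hD : invD ξ = 0 := by
    rcases lt_or_gt_of_ne hij with h | h
    · exact Finset.prod_eq_zero (i := (i, j)) (by simpa using h) (by simp [h₁])
    · exact Finset.prod_eq_zero (i := (j, i)) (by simpa using h) (by simp [h₁])
  have hE : invE ξ = 0 := by
    obtain ⟨t, ht₁, ht₂, ht₃⟩ := exists_separating_matching i j l hij hjl hil
    have hc (r : Fin 6) (hr : r ∈ [i, j, l]) : ξ r = ξ l := by
      simp only [List.mem_cons, List.not_mem_nil, or_false] at hr
      rcases hr with rfl | rfl | rfl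
      · exact h₁.trans h₂
      · exact h₂
      · rfl
    rw [invE_eq_prod]
    exact Finset.prod_eq_zero (Finset.mem_univ t) (matchDet_eq_zero ξ (ξ l)
      (ht₁.imp (hc _) (hc _)) (ht₂.imp (hc _) (hc _)) (ht₃.imp (hc _) (hc _)))
  simp only [hB, hC, hD, hE, mul_zero, and_self]
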